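/- Let α > 0 be a non-integer real number and let k_l, k_s, d_l, d_s, γ, T_i, T_∞, h₀ be positive constants with ω = √(d_l/d_s). For ν > 0 define s(t) = 2ν√(d_l t) and the functions Ψ_l, Ψ_s as follows: F_l = −2 h₀ T_∞ √(d_l) M(−α/2,1/2,−ν²) / [ k_l M(−α/2,1/2,−ν²) + 2√(d_l) h₀ ν M(−α/2+1/2,3/2,−ν²) ]; E_l = −ν M(−α/2+1/2,3/2,−ν²) F_l / M(−α/2,1/2,−ν²); F_s = −T_i 2^{α+1} d_s^{α/2} M(α/2+1/2,1/2,ν²ω²) / U(α/2+1/2,1/2,ν²ω²); E_s = −νω M(−α/2+1/2,3/2,−ν²ω²) F_s / M(−α/2,1/2,−ν²ω²); Ψ_l(x,t) = t^{α/2}[ E_l M(−α/2,1/2,−η_l²) + F_l η_l M(−α/2+1/2,3/2,−η_l²) ], η_l = x/(2√(d_l t)); Ψ_s(x,t) = t^{α/2}[ E_s M(−α/2,1/2,−η_s²) + F_s η_s M(−α/2+1/2,3/2,−η_s²) ], η_s = x/(2√(d_s t)). Then the Stefan condition k_s ∂Ψ_s/∂x(s(t),t) − k_l ∂Ψ_l/∂x(s(t),t)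 = γ s(t)^α s'(t) holds for all t > 0 if and only if ν satisfies equation (24): −(k_s T_i d_s^{(α−1)/2} / (γ d_l^{(α+1)/2})) f₁(ν) + (h₀ T_∞ / (γ 2^α d_l^{(α+1)/2})) f₂(ν) = ν^{α+1}. -/

import Mathlib

noncomputable def poch (a : ℝ) (s : ℕ) : ℝ := ∏ i ∈ Finset.range s, (a + i)

/-- Kummer's confluent hypergeometric function `M(a,b,z)`,
defined by the everywhere-convergent series `M(a,b,z) = Σ_{s} (a)_s z^s / ((b)_s s!)`. -/
noncomputable def kummerM (a b z : ℝ) : ℝ :=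
  ∑' s : ℕ, poch a s / (poch b s * (Nat.factorial s)) * z ^ s

/-- Tricomi's confluent hypergeometric function
`U(a,b,z) = (1/Γ(a)) ∫_0^∞ e^{−z t} t^{a−1} (1+t)^{b−a−1} dt`. -/
noncomputable def tricomiU (a b z : ℝ) : ℝ :=
  (1 / Real.Gamma a) *
    ∫ t in Set.Ioi (0:ℝ), Real.exp (-z * t) * t ^ (a - 1) * (1 + t) ^ (b - a - 1)

/-!
For a fixed time both temperatures are combinations `E y + F w` of the even solution `y` and the odd
solution `w` of `y'' + 2 η y' = 2 α y`, with `E` chosen so that the combination vanishes at the free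
boundary. At a zero the derivative of such a combination is `F W / y`, where `W = y w' - y' w`; by
Abel's identity `W = exp (-η²)`, and by Kummer's transformation
`y = exp (-η²) M(α/2 + 1/2, 1/2, η²)`, so the two exponentials cancel. Hence both heat fluxes
and the latent heat term are constants times `t ^ ((α - 1) / 2)`, and the Stefan condition is one
equation between the constants.
-/

open Filter Topology Finset

/-! ### The Kummer function -/

lemma poch_zero (a : ℝ) : poch a 0 = 1 := by simp [poch]

lemma poch_succ (a : ℝ) (n : ℕ) : poch a (n + 1) = poch a n * (a + n) :=
  prod_range_succ _ _

lemma poch_add (a : ℝ) (m n : ℕ) : poch a (m + n) = poch a m * poch (a + m) n := by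
  simp only [poch, prod_range_add, Nat.cast_add, add_assoc]

lemma poch_succ_left (a : ℝ) (n : ℕ) : poch a (n + 1) = a * poch (a + 1) n := by
  rw [add_comm, poch_add, poch_succ, poch_zero, Nat.cast_one, Nat.cast_zero, add_zero, one_mul]

lemma poch_pos {a : ℝ} (ha : 0 < a) (n : ℕ) : 0 < poch a n :=
  prod_pos fun _ _ ↦ by positivity

lemma poch_ne_zero {a : ℝ} (ha : ∀ n : ℕ, a + n ≠ 0) (n : ℕ) : poch a n ≠ 0 :=
  prod_ne_zero_iff.2 fun i _ ↦ ha i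

lemma chu_vandermonde_poch (b c : ℝ) (n : ℕ) :
    ∑ ij ∈ antidiagonal n,
      (n.choose ij.1 : ℝ) * ((-1) ^ ij.1 * poch c ij.1 * poch (b + ij.1) ij.2) =
        poch (b - c) n := by
  induction n generalizing b with
  | zero => simp [poch]
  | succ n ih =>
    rw [sum_antidiagonal_choose_succ_mul
        (fun i j ↦ (-1 : ℝ) ^ i * poch c i * poch (b + i) j), ← sum_add_distrib,
      poch_succ_left, sub_add_eq_add_sub, ← ih (b + 1), mul_sum]
    -- Pascal's rule produces `(b + i) - (c + i) = b - c`, the first factor of `(b - c)_(n + 1)`.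
    refine sum_congr rfl fun ij hij ↦ ?_
    rw [← Nat.choose_symm_of_eq_add (mem_antidiagonal.1 hij).symm, poch_succ_left (b + ij.1),
      poch_succ c, pow_succ, Nat.cast_succ, add_right_comm b 1, ← add_assoc]
    ring

/-- The coefficient of `z ^ n` in the series defining `kummerM a b z`. -/
noncomputable def kummerCoeff (a b : ℝ) (n : ℕ) : ℝ := poch a n / (poch b n * n.factorial)

lemma kummerCoeff_zero (a b : ℝ) : kummerCoeff a b 0 = 1 := by
  simp [kummerCoeff, poch_zero]

lemma kummerCoeff_succ (a b : ℝ) (n : ℕ) :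
    kummerCoeff a b (n + 1) = kummerCoeff a b n * ((a + n) / ((b + n) * (n + 1))) := by
  rw [kummerCoeff, kummerCoeff, poch_succ, poch_succ, Nat.factorial_succ, div_mul_div_comm]
  push_cast
  ring

lemma kummerCoeff_succ_mul (a b : ℝ) (n : ℕ) :
    kummerCoeff a b (n + 1) * (n + 1) = a / b * kummerCoeff (a + 1) (b + 1) n := by
  have hn : (n : ℝ) + 1 ≠ 0 := n.cast_add_one_ne_zero
  rw [kummerCoeff, kummerCoeff, poch_succ_left, poch_succ_left, Nat.factorial_succ]
  push_cast
  field_simp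

lemma summable_kummerCoeff_mul_pow (a b z : ℝ) : Summable fun n ↦ kummerCoeff a b n * z ^ n := by
  have ratio_tendsto : Tendsto (fun n : ℕ ↦ (a + n) / ((b + n) * (n + 1)) * z) atTop (𝓝 0) := by
    have h := ((tendsto_add_mul_div_add_mul_atTop_nhds a b 1 one_ne_zero).mul
      tendsto_one_div_add_atTop_nhds_zero_nat).mul_const z
    simpa only [one_mul, mul_zero, zero_mul, div_mul_div_comm, mul_one] using h
  refine summable_of_ratio_norm_eventually_le (r := 1 / 2) (by norm_num) ?_
  filter_upwards [ratio_tendsto.norm.eventually_le_const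
    (show ‖(0 : ℝ)‖ < 1 / 2 by norm_num)] with n hn
  calc ‖kummerCoeff a b (n + 1) * z ^ (n + 1)‖
      = ‖(a + n) / ((b + n) * (n + 1)) * z‖ * ‖kummerCoeff a b n * z ^ n‖ := by
        rw [← norm_mul, kummerCoeff_succ, pow_succ]
        ring_nf
    _ ≤ 1 / 2 * ‖kummerCoeff a b n * z ^ n‖ := by gcongr

lemma hasSum_kummerM (a b z : ℝ) : HasSum (fun n ↦ kummerCoeff a b n * z ^ n) (kummerM a b z) :=
  (summable_kummerCoeff_mul_pow a b z).hasSum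

lemma kummerM_zero (a b : ℝ) : kummerM a b 0 = 1 := by
  refine (hasSum_kummerM a b 0).unique ?_
  convert hasSum_single 0 fun n hn ↦ ?_
  · simp [kummerCoeff_zero]
  · simp [hn]

lemma kummerM_pos {a b z : ℝ} (ha : 0 < a) (hb : 0 < b) (hz : 0 ≤ z) : 0 < kummerM a b z := by
  refine (summable_kummerCoeff_mul_pow a b z).tsum_pos (fun n ↦ ?_) 0 ?_
  · have := poch_pos ha n
    have := poch_pos hb n
    unfold kummerCoeff
    positivity
  · simp [kummerCoeff_zero]

lemma hasDerivAt_tsum_mul_pow {𝕜 : Type*} [RCLike 𝕜] {c : ℕ → 𝕜}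
    (hc : ∀ r : 𝕜, Summable fun n ↦ c n * r ^ n) (z : 𝕜) :
    HasDerivAt (fun x ↦ ∑' n, c n * x ^ n) (∑' n, c (n + 1) * (n + 1) * z ^ n) z := by
  set r : ℝ := ‖z‖ + 1
  have one_le_r : 1 ≤ r := le_add_of_nonneg_left (norm_nonneg z)
  have term_bound : ∀ (n : ℕ) (y : 𝕜), ‖y‖ ≤ r →
      ‖c n * (n * y ^ (n - 1))‖ ≤ ‖c n * (2 * r : ℝ) ^ n‖ := fun n y hy ↦ by
    rw [norm_mul, norm_mul, norm_mul, norm_pow, RCLike.norm_natCast, norm_pow, RCLike.norm_ofReal,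
      abs_of_pos (by positivity), mul_pow]
    gcongr ‖c n‖ * (?_ * ?_)
    · exact_mod_cast n.lt_two_pow_self.le
    · exact (pow_le_pow_left₀ (norm_nonneg y) hy _).trans (pow_le_pow_right₀ one_le_r (n.sub_le 1))
  have bound_summable : Summable fun n ↦ ‖c n * (2 * r : ℝ) ^ n‖ := (hc _).norm
  have z_mem : z ∈ Metric.ball (0 : 𝕜) r := by simp [r]
  have deriv_series := hasDerivAt_tsum_of_isPreconnected
    (g := fun n y ↦ c n * y ^ n) (g' := fun n y ↦ c n * (n * y ^ (n - 1)))
    bound_summable Metric.isOpen_ball (convex_ball _ _).isPreconnected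
    (fun n y _ ↦ (hasDerivAt_pow n y).const_mul (c n))
    (fun n y hy ↦ term_bound n y (mem_ball_zero_iff.1 hy).le) z_mem (hc z) z_mem
  have deriv_summable : Summable fun n ↦ c n * (n * z ^ (n - 1)) :=
    bound_summable.of_norm_bounded fun n ↦ term_bound n z (mem_ball_zero_iff.1 z_mem).le
  refine deriv_series.congr_deriv ?_
  rw [deriv_summable.tsum_eq_zero_add]
  simp [mul_assoc]

lemma hasDerivAt_kummerM (a b z : ℝ) :
    HasDerivAt (kummerM a b) (a / b * kummerM (a + 1) (b + 1) z) z := by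
  refine (hasDerivAt_tsum_mul_pow (summable_kummerCoeff_mul_pow a b) z).congr_deriv ?_
  simp only [kummerCoeff_succ_mul, mul_assoc]
  exact tsum_mul_left

lemma hasSum_natCast_mul_kummerCoeff_mul_pow (a b z : ℝ) :
    HasSum (fun n : ℕ ↦ n * kummerCoeff a b n * z ^ n)
      (z * (a / b * kummerM (a + 1) (b + 1) z)) := by
  rw [← hasSum_nat_add_iff' 1]
  simp only [range_one, sum_singleton, Nat.cast_zero, zero_mul, sub_zero]
  refine (((hasSum_kummerM (a + 1) (b + 1) z).mul_left (a / b)).mul_left z).congr_fun fun n ↦ ?_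
  rw [← mul_assoc (a / b), ← kummerCoeff_succ_mul]
  push_cast
  ring

/-- Since `M' = a / b * M(a + 1, b + 1)`, this reads `z M'' + (b - z) M' = a M`. -/
lemma kummer_equation (a : ℝ) {b : ℝ} (hb : ∀ n : ℕ, b + n ≠ 0) (z : ℝ) :
    z * (a / b * ((a + 1) / (b + 1) * kummerM (a + 1 + 1) (b + 1 + 1) z)) +
      (b - z) * (a / b * kummerM (a + 1) (b + 1) z) = a * kummerM a b z := by
  have series := (((hasSum_natCast_mul_kummerCoeff_mul_pow (a + 1) (b + 1) z).mul_left (a / b)).add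
    (((hasSum_kummerM (a + 1) (b + 1) z).mul_left (a / b)).mul_left b)).sub
    (hasSum_natCast_mul_kummerCoeff_mul_pow a b z)
  have coeff_eq : ∀ n : ℕ, a / b * (n * kummerCoeff (a + 1) (b + 1) n * z ^ n) +
      b * (a / b * (kummerCoeff (a + 1) (b + 1) n * z ^ n)) - n * kummerCoeff a b n * z ^ n =
        a * (kummerCoeff a b n * z ^ n) := fun n ↦ by
    have hn : (n : ℝ) + 1 ≠ 0 := n.cast_add_one_ne_zero
    have recurrence : a / b * kummerCoeff (a + 1) (b + 1) n * (b + n) =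
        kummerCoeff a b n * (a + n) := by
      rw [← kummerCoeff_succ_mul, kummerCoeff_succ]
      field_simp [hb n]
    linear_combination z ^ n * recurrence
  have := (series.congr_fun fun n ↦ (coeff_eq n).symm).unique ((hasSum_kummerM a b z).mul_left a)
  linear_combination this

lemma sum_antidiagonal_kummerCoeff (a : ℝ) {b : ℝ} (hb : ∀ n : ℕ, b + n ≠ 0) (n : ℕ) :
    ∑ ij ∈ antidiagonal n, (-1) ^ ij.1 * kummerCoeff (b - a) b ij.1 / ij.2.factorial =
      kummerCoeff a b n := by
  rw [kummerCoeff, ← sub_sub_cancel b a, ← chu_vandermonde_poch b (b - a), sum_div,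
    sub_sub_cancel]
  refine sum_congr rfl ?_
  rintro ⟨i, j⟩ hij
  obtain rfl : i + j = n := mem_antidiagonal.1 hij
  have hi := poch_ne_zero hb i
  have hj : poch (b + i) j ≠ 0 :=
    poch_ne_zero (fun n ↦ by simpa only [Nat.cast_add, add_assoc] using hb (i + n)) j
  rw [kummerCoeff, poch_add b, Nat.cast_add_choose ℝ]
  field_simp

lemma kummer_transformation (a : ℝ) {b : ℝ} (hb : ∀ n : ℕ, b + n ≠ 0) (z : ℝ) :
    Real.exp z * kummerM (b - a) b (-z) = kummerM a b z := by
  have exp_series : HasSum (fun n : ℕ ↦ z ^ n / n.factorial) (Real.exp z) := by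
    rw [Real.exp_eq_exp_ℝ]
    exact NormedSpace.expSeries_div_hasSum_exp z
  have kummer_series := hasSum_kummerM (b - a) b (-z)
  rw [← exp_series.tsum_eq, ← kummer_series.tsum_eq, mul_comm,
    tsum_mul_tsum_eq_tsum_sum_antidiagonal_of_summable_norm kummer_series.summable.norm
      exp_series.summable.norm, ← (hasSum_kummerM a b z).tsum_eq]
  refine tsum_congr fun n ↦ ?_
  rw [← sum_antidiagonal_kummerCoeff a hb, sum_mul]
  refine sum_congr rfl fun ij hij ↦ ?_
  rw [← mem_antidiagonal.1 hij, pow_add, neg_pow]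
  ring

/-! ### Linear second-order equations -/

/-- `y` solves the linear second-order equation `y'' = p y' + q y` on the whole line, the setting of
Abel's identity. -/
structure IsLinearODESolution (p q y : ℝ → ℝ) : Prop where
  differentiable : Differentiable ℝ y
  hasDerivAt_deriv : ∀ z, HasDerivAt (deriv y) (p z * deriv y z + q z * y z) z

lemma IsLinearODESolution.of_hasDerivAt {p q y y' : ℝ → ℝ} (hy : ∀ z, HasDerivAt y (y' z) z)
    (hy' : ∀ z, HasDerivAt y' (p z * y' z + q z * y z) z) : IsLinearODESolution p q y where
  differentiable z := (hy z).differentiableAt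
  hasDerivAt_deriv z := by simpa only [funext fun x ↦ (hy x).deriv] using hy' z

/-- The Wronskian `y w' - y' w`, which governs the derivative of a combination of `y` and `w` at
its zeros. -/
noncomputable def wronskian (y w : ℝ → ℝ) (z : ℝ) : ℝ := y z * deriv w z - deriv y z * w z

lemma abel_identity {p q P y w : ℝ → ℝ} (hP : ∀ z, HasDerivAt P (p z) z)
    (hy : IsLinearODESolution p q y) (hw : IsLinearODESolution p q w) (z₀ z : ℝ) :
    wronskian y w z = Real.exp (P z - P z₀) * wronskian y w z₀ := by
  have wronskian_deriv : ∀ x, HasDerivAt (wronskian y w) (p x * wronskian y w x) x := fun x ↦ by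
    refine (((hy.differentiable x).hasDerivAt.mul (hw.hasDerivAt_deriv x)).sub
      ((hy.hasDerivAt_deriv x).mul (hw.differentiable x).hasDerivAt)).congr_deriv ?_
    rw [wronskian]
    ring
  have quotient_deriv : ∀ x, HasDerivAt (fun x ↦ Real.exp (-P x) * wronskian y w x) 0 x := fun x ↦
    ((hP x).neg.exp.mul (wronskian_deriv x)).congr_deriv (by ring)
  have quotient_const := is_const_of_deriv_eq_zero (fun x ↦ (quotient_deriv x).differentiableAt)
    (fun x ↦ (quotient_deriv x).deriv) z z₀
  rw [Real.exp_neg, Real.exp_neg, inv_mul_eq_iff_eq_mul₀ (Real.exp_ne_zero _)] at quotient_const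
  rw [quotient_const, Real.exp_sub]
  ring

lemma hasDerivAt_of_linearCombination_eq_zero {y w : ℝ → ℝ} {E F z : ℝ}
    (hy : DifferentiableAt ℝ y z) (hw : DifferentiableAt ℝ w z) (hyz : y z ≠ 0)
    (hzero : E * y z + F * w z = 0) :
    HasDerivAt (fun x ↦ E * y x + F * w x) (F * wronskian y w z / y z) z := by
  refine ((hy.hasDerivAt.const_mul E).add (hw.hasDerivAt.const_mul F)).congr_deriv ?_
  rw [wronskian, eq_div_iff hyz]
  linear_combination deriv y z * hzero

/-! ### Similarity solutions of the heat equation -/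

/-- The even solution of `y'' + 2 z y' = 2 α y`, the equation satisfied by `y` whenever
`t ^ (α / 2) * y (x / (2 * √(d * t)))` solves the heat equation with diffusivity `d`. -/
noncomputable def similarityEven (α z : ℝ) : ℝ := kummerM (-α / 2) (1 / 2) (-z ^ 2)

/-- The odd solution of `y'' + 2 z y' = 2 α y`. -/
noncomputable def similarityOdd (α z : ℝ) : ℝ := z * kummerM (-α / 2 + 1 / 2) (3 / 2) (-z ^ 2)

lemma hasDerivAt_kummerM_neg_sq (a b z : ℝ) :
    HasDerivAt (fun x ↦ kummerM a b (-x ^ 2))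
      (-2 * z * (a / b * kummerM (a + 1) (b + 1) (-z ^ 2))) z := by
  refine ((hasDerivAt_kummerM a b (-z ^ 2)).comp z (hasDerivAt_pow 2 z).neg).congr_deriv ?_
  norm_num
  ring

lemma hasDerivAt_similarityOdd (α z : ℝ) :
    HasDerivAt (similarityOdd α)
      (kummerM (-α / 2 + 1 / 2) (3 / 2) (-z ^ 2) -
        2 * z ^ 2 * ((-α / 2 + 1 / 2) / (3 / 2) *
          kummerM (-α / 2 + 1 / 2 + 1) (3 / 2 + 1) (-z ^ 2))) z :=
  ((hasDerivAt_id' z).mul (hasDerivAt_kummerM_neg_sq _ _ z)).congr_deriv (by ring)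

lemma similarityEven_isLinearODESolution (α : ℝ) :
    IsLinearODESolution (fun z ↦ -2 * z) (fun _ ↦ 2 * α) (similarityEven α) := by
  refine .of_hasDerivAt (hasDerivAt_kummerM_neg_sq (-α / 2) (1 / 2)) fun z ↦ ?_
  refine (((hasDerivAt_id' z).const_mul (-2)).mul
    ((hasDerivAt_kummerM_neg_sq (-α / 2 + 1) (1 / 2 + 1) z).const_mul _)).congr_deriv ?_
  rw [similarityEven]
  linear_combination
    -4 * kummer_equation (-α / 2) (b := 1 / 2) (fun n ↦ by positivity) (-z ^ 2)

lemma similarityOdd_isLinearODESolution (α : ℝ) :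
    IsLinearODESolution (fun z ↦ -2 * z) (fun _ ↦ 2 * α) (similarityOdd α) := by
  refine .of_hasDerivAt (hasDerivAt_similarityOdd α) fun z ↦ ?_
  refine ((hasDerivAt_kummerM_neg_sq (-α / 2 + 1 / 2) (3 / 2) z).sub
    (((hasDerivAt_pow 2 z).const_mul 2).mul
      ((hasDerivAt_kummerM_neg_sq (-α / 2 + 1 / 2 + 1) (3 / 2 + 1) z).const_mul
        ((-α / 2 + 1 / 2) / (3 / 2))))).congr_deriv ?_
  rw [similarityOdd]
  norm_num
  linear_combination (norm := (norm_num; ring))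
    -4 * z * kummer_equation (-α / 2 + 1 / 2) (b := 3 / 2) (fun n ↦ by positivity) (-z ^ 2)

lemma wronskian_similarityEven_similarityOdd (α z : ℝ) :
    wronskian (similarityEven α) (similarityOdd α) z = Real.exp (-z ^ 2) := by
  have neg_sq_deriv : ∀ x : ℝ, HasDerivAt (fun x ↦ -x ^ 2) (-2 * x) x := fun x ↦
    (hasDerivAt_pow 2 x).neg.congr_deriv (by norm_num)
  have wronskian_zero : wronskian (similarityEven α) (similarityOdd α) 0 = 1 := by
    simp [wronskian, (hasDerivAt_similarityOdd α 0).deriv, similarityEven, similarityOdd,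
      kummerM_zero]
  simpa [wronskian_zero] using abel_identity neg_sq_deriv (similarityEven_isLinearODESolution α)
    (similarityOdd_isLinearODESolution α) 0 z

lemma similarityEven_eq_exp_mul (α z : ℝ) :
    similarityEven α z = Real.exp (-z ^ 2) * kummerM (α / 2 + 1 / 2) (1 / 2) (z ^ 2) := by
  rw [similarityEven, ← kummer_transformation _ fun n ↦ by positivity, neg_neg]
  ring_nf

lemma similarityOdd_eq_exp_mul (α z : ℝ) :
    similarityOdd α z = Real.exp (-z ^ 2) * (z * kummerM (α / 2 + 1) (3 / 2) (z ^ 2)) := by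
  rw [similarityOdd, ← kummer_transformation _ fun n ↦ by positivity, neg_neg]
  ring_nf

lemma similarityEven_pos {α : ℝ} (hα : -1 < α) (z : ℝ) : 0 < similarityEven α z := by
  rw [similarityEven_eq_exp_mul]
  exact mul_pos (Real.exp_pos _) (kummerM_pos (by linarith) (by norm_num) (sq_nonneg z))

/-- The temperature `t ^ (α / 2) * (E * similarityEven α η + F * similarityOdd α η)` in the
similarity variable `η = x / (2 * √(d * t))`: both phases of the Stefan problem have this form. -/
noncomputable def similarityTemperature (α d E F x t : ℝ) : ℝ :=
  t ^ (α / 2) * (E * similarityEven α (x / (2 * √(d * t))) +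
    F * similarityOdd α (x / (2 * √(d * t))))

lemma rpow_half_div_sqrt {t : ℝ} (ht : 0 < t) (α : ℝ) :
    t ^ (α / 2) / √t = t ^ ((α - 1) / 2) := by
  rw [Real.sqrt_eq_rpow, ← Real.rpow_sub ht, sub_div]

lemma rpow_half_mul_sqrt {t : ℝ} (ht : 0 < t) (α : ℝ) :
    t ^ (α / 2) * √t = t ^ ((α + 1) / 2) := by
  rw [Real.sqrt_eq_rpow, ← Real.rpow_add ht, add_div]

lemma deriv_similarityTemperature {α d t z E F : ℝ} (hα : -1 < α) (hd : 0 < d) (ht : 0 < t)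
    (hE : E = -z * kummerM (-α / 2 + 1 / 2) (3 / 2) (-z ^ 2) * F /
      kummerM (-α / 2) (1 / 2) (-z ^ 2)) :
    deriv (fun x ↦ similarityTemperature α d E F x t) (z * (2 * √(d * t))) =
      t ^ ((α - 1) / 2) / (2 * √d) * (F / kummerM (α / 2 + 1 / 2) (1 / 2) (z ^ 2)) := by
  have even_ne_zero : similarityEven α z ≠ 0 := (similarityEven_pos hα z).ne'
  have profile_eq_zero : E * similarityEven α z + F * similarityOdd α z = 0 := by
    rw [hE, ← similarityEven, div_mul_cancel₀ _ even_ne_zero, similarityOdd]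
    ring
  have profile_deriv := hasDerivAt_of_linearCombination_eq_zero
    ((similarityEven_isLinearODESolution α).differentiable z)
    ((similarityOdd_isLinearODESolution α).differentiable z) even_ne_zero profile_eq_zero
  rw [wronskian_similarityEven_similarityOdd, similarityEven_eq_exp_mul, mul_comm F,
    mul_div_mul_left _ _ (Real.exp_ne_zero _)] at profile_deriv
  have scale_ne_zero : 2 * √(d * t) ≠ 0 := by positivity
  have temperature_deriv := ((profile_deriv.comp_of_eq (z * (2 * √(d * t)))
    ((hasDerivAt_id' (z * (2 * √(d * t)))).div_const (2 * √(d * t)))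
    (mul_div_cancel_right₀ z scale_ne_zero).symm).const_mul (t ^ (α / 2))).deriv
  refine temperature_deriv.trans ?_
  rw [← rpow_half_div_sqrt ht, Real.sqrt_mul hd.le]
  ring

/-! ### The Stefan condition -/

-- If the denominator of `F` vanishes, so does that of the right-hand side, and both sides are `0`
-- because `x / 0 = 0`.
lemma liquid_heat_flux {α k d h T ν t E F : ℝ} (hα : -1 < α) (hk : 0 < k) (hd : 0 < d)
    (ht : 0 < t)
    (hF : F = -(2 * h * T * √d * kummerM (-α / 2) (1 / 2) (-ν ^ 2)) /
      (k * kummerM (-α / 2) (1 / 2) (-ν ^ 2) +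
        2 * √d * h * ν * kummerM (-α / 2 + 1 / 2) (3 / 2) (-ν ^ 2)))
    (hE : E = -ν * kummerM (-α / 2 + 1 / 2) (3 / 2) (-ν ^ 2) * F /
      kummerM (-α / 2) (1 / 2) (-ν ^ 2)) :
    k * deriv (fun x ↦ similarityTemperature α d E F x t) (ν * (2 * √(d * t))) =
      -(h * T) * t ^ ((α - 1) / 2) * (1 / (kummerM (α / 2 + 1 / 2) (1 / 2) (ν ^ 2) +
        2 * √d * h / k * ν * kummerM (α / 2 + 1) (3 / 2) (ν ^ 2))) := by
  rw [deriv_similarityTemperature hα hd ht hE, hF, ← similarityEven, mul_assoc _ ν,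
    ← similarityOdd, similarityEven_eq_exp_mul, similarityOdd_eq_exp_mul]
  have hm : 0 < kummerM (α / 2 + 1 / 2) (1 / 2) (ν ^ 2) :=
    kummerM_pos (by linarith) (by norm_num) (sq_nonneg ν)
  set m := kummerM (α / 2 + 1 / 2) (1 / 2) (ν ^ 2)
  set n := kummerM (α / 2 + 1) (3 / 2) (ν ^ 2)
  have exp_factor : k * (Real.exp (-ν ^ 2) * m) + 2 * √d * h * (Real.exp (-ν ^ 2) * (ν * n)) =
      Real.exp (-ν ^ 2) * (k * m + 2 * √d * h * (ν * n)) := by ring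
  have denominator_eq : m + 2 * √d * h / k * ν * n = (k * m + 2 * √d * h * (ν * n)) / k := by
    field_simp
  rw [exp_factor, denominator_eq]
  field_simp

lemma solid_heat_flux {α k d T z t E F : ℝ} (hα : -1 < α) (hd : 0 < d) (ht : 0 < t)
    (hF : F = -T * 2 ^ (α + 1) * d ^ (α / 2) * kummerM (α / 2 + 1 / 2) (1 / 2) (z ^ 2) /
      tricomiU (α / 2 + 1 / 2) (1 / 2) (z ^ 2))
    (hE : E = -z * kummerM (-α / 2 + 1 / 2) (3 / 2) (-z ^ 2) * F /
      kummerM (-α / 2) (1 / 2) (-z ^ 2)) :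
    k * deriv (fun x ↦ similarityTemperature α d E F x t) (z * (2 * √(d * t))) =
      -(k * T * 2 ^ α * d ^ ((α - 1) / 2)) * t ^ ((α - 1) / 2) *
        (1 / tricomiU (α / 2 + 1 / 2) (1 / 2) (z ^ 2)) := by
  have hm : kummerM (α / 2 + 1 / 2) (1 / 2) (z ^ 2) ≠ 0 :=
    (kummerM_pos (by linarith) (by norm_num) (sq_nonneg z)).ne'
  rw [deriv_similarityTemperature hα hd ht hE, hF, div_right_comm, mul_div_cancel_right₀ _ hm,
    ← rpow_half_div_sqrt hd, Real.rpow_add_one two_ne_zero]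
  ring

lemma rpow_mul_deriv_sqrt_boundary (α : ℝ) {d ν t : ℝ} (hd : 0 < d) (hν : 0 < ν) (ht : 0 < t) :
    (2 * ν * √(d * t)) ^ α * deriv (fun τ ↦ 2 * ν * √(d * τ)) t =
      2 ^ α * d ^ ((α + 1) / 2) * t ^ ((α - 1) / 2) * ν ^ (α + 1) := by
  have boundary_deriv : deriv (fun τ ↦ 2 * ν * √(d * τ)) t = ν * √d / √t := by
    simp only [Real.sqrt_mul hd.le]
    rw [(((Real.hasDerivAt_sqrt ht.ne').const_mul √d).const_mul (2 * ν)).deriv]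
    field_simp
  have boundary_rpow :
      (2 * ν * √(d * t)) ^ α = 2 ^ α * ν ^ α * (d ^ (α / 2) * t ^ (α / 2)) := by
    rw [Real.mul_rpow (by positivity) (by positivity), Real.mul_rpow two_pos.le hν.le,
      Real.sqrt_eq_rpow, ← Real.rpow_mul (by positivity), one_div_mul_eq_div,
      Real.mul_rpow hd.le ht.le]
  rw [boundary_deriv, boundary_rpow, ← rpow_half_mul_sqrt hd, ← rpow_half_div_sqrt ht,
    Real.rpow_add_one hν.ne']
  ring

lemma sqrt_div_mul_sqrt_mul {a b : ℝ} (ha : 0 ≤ a) (hb : 0 < b) (c : ℝ) :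
    √(a / b) * √(b * c) = √(a * c) := by
  rw [← Real.sqrt_mul (div_nonneg ha hb.le), ← mul_assoc, div_mul_cancel₀ _ hb.ne']

lemma forall_pos_iff_of_forall_iff {P : ℝ → Prop} {Q : Prop} (h : ∀ t, 0 < t → (P t ↔ Q)) :
    (∀ t, 0 < t → P t) ↔ Q :=
  ⟨fun hP ↦ (h 1 one_pos).1 (hP 1 one_pos), fun hQ t ht ↦ (h t ht).2 hQ⟩

theorem statement_19_general (α kl ks dl ds γ Ti Tinf h₀ : ℝ)
    (hα : -1 < α) (hkl : 0 < kl) (hdl : 0 < dl) (hds : 0 < ds) (hγ : γ ≠ 0)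
    (ω : ℝ) (hω : ω = √(dl / ds))
    (ν : ℝ) (hνpos : 0 < ν)
    (s : ℝ → ℝ) (hs : ∀ t : ℝ, s t = 2 * ν * √(dl * t))
    (Fl El Fs Es : ℝ)
    (hFl : Fl = -(2 * h₀ * Tinf * √dl * kummerM (-α / 2) (1 / 2) (-ν ^ 2)) /
      (kl * kummerM (-α / 2) (1 / 2) (-ν ^ 2)
        + 2 * √dl * h₀ * ν * kummerM (-α / 2 + 1 / 2) (3 / 2) (-ν ^ 2)))
    (hEl : El = -ν * kummerM (-α / 2 + 1 / 2) (3 / 2) (-ν ^ 2) * Fl /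
      kummerM (-α / 2) (1 / 2) (-ν ^ 2))
    (hFs : Fs = -Ti * (2:ℝ) ^ (α + 1) * ds ^ (α / 2) *
      kummerM (α / 2 + 1 / 2) (1 / 2) (ν ^ 2 * ω ^ 2) /
        tricomiU (α / 2 + 1 / 2) (1 / 2) (ν ^ 2 * ω ^ 2))
    (hEs : Es = -ν * ω * kummerM (-α / 2 + 1 / 2) (3 / 2) (-(ν ^ 2 * ω ^ 2)) * Fs /
      kummerM (-α / 2) (1 / 2) (-(ν ^ 2 * ω ^ 2)))
    (Ψl Ψs : ℝ → ℝ → ℝ)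
    (hΨl : ∀ x t : ℝ, Ψl x t =
      t ^ (α / 2) *
        (El * kummerM (-α / 2) (1 / 2) (-(x / (2 * √(dl * t))) ^ 2)
          + Fl * (x / (2 * √(dl * t))) *
              kummerM (-α / 2 + 1 / 2) (3 / 2) (-(x / (2 * √(dl * t))) ^ 2)))
    (hΨs : ∀ x t : ℝ, Ψs x t =
      t ^ (α / 2) *
        (Es * kummerM (-α / 2) (1 / 2) (-(x / (2 * √(ds * t))) ^ 2)
          + Fs * (x / (2 * √(ds * t))) *
              kummerM (-α / 2 + 1 / 2) (3 / 2) (-(x / (2 * √(ds * t))) ^ 2))) :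
    (∀ t : ℝ, 0 < t →
        ks * deriv (fun y => Ψs y t) (s t) - kl * deriv (fun y => Ψl y t) (s t)
          = γ * (s t) ^ α * deriv s t) ↔
      -(ks * Ti * ds ^ ((α - 1) / 2) / (γ * dl ^ ((α + 1) / 2))) *
          (1 / tricomiU (α / 2 + 1 / 2) (1 / 2) (ν ^ 2 * ω ^ 2))
        + h₀ * Tinf / (γ * (2:ℝ) ^ α * dl ^ ((α + 1) / 2)) *
          (1 / (kummerM (α / 2 + 1 / 2) (1 / 2) (ν ^ 2)
                + 2 * √dl * h₀ / kl * ν * kummerM (α / 2 + 1) (3 / 2) (ν ^ 2)))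
        = ν ^ (α + 1) := by
  obtain rfl : s = fun t ↦ 2 * ν * √(dl * t) := funext hs
  obtain rfl : Ψl = similarityTemperature α dl El Fl := by
    ext x t
    rw [hΨl, similarityTemperature, similarityEven, similarityOdd, mul_assoc Fl]
  obtain rfl : Ψs = similarityTemperature α ds Es Fs := by
    ext x t
    rw [hΨs, similarityTemperature, similarityEven, similarityOdd, mul_assoc Fs]
  rw [← mul_pow] at hFs hEs ⊢
  rw [neg_mul] at hEs
  refine forall_pos_iff_of_forall_iff fun t ht ↦ ?_
  have liquid_flux := liquid_heat_flux hα hkl hdl ht hFl hEl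
  rw [show ν * (2 * √(dl * t)) = 2 * ν * √(dl * t) by ring] at liquid_flux
  have solid_position : ν * ω * (2 * √(ds * t)) = 2 * ν * √(dl * t) := by
    rw [← sqrt_div_mul_sqrt_mul hdl.le hds, ← hω]
    ring
  have solid_flux := solid_heat_flux (k := ks) hα hds ht hFs hEs
  rw [solid_position] at solid_flux
  have scale_ne_zero : γ * 2 ^ α * dl ^ ((α + 1) / 2) * t ^ ((α - 1) / 2) ≠ 0 := by positivity
  rw [mul_assoc γ, rpow_mul_deriv_sqrt_boundary α hdl hνpos ht, solid_flux, liquid_flux]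
  refine (Eq.congr ?_ ?_).trans (mul_right_inj' scale_ne_zero)
  · field_simp
    ring
  · ring

/-- with the displayed similarity-type temperatures `Ψ_l, Ψ_s` and free
boundary `s(t) = 2ν√(d_l t)`, the Stefan condition
`k_s ∂Ψ_s/∂x(s(t),t) − k_l ∂Ψ_l/∂x(s(t),t) = γ s(t)^α s'(t)` holds for all `t > 0`
iff `ν` satisfies equation (24). -/
theorem statement_19 (α kl ks dl ds γ Ti Tinf h₀ : ℝ)
    (hα : 0 < α) (hαnotint : ∀ n : ℤ, α ≠ n)
    (hkl : 0 < kl) (hks : 0 < ks) (hdl : 0 < dl) (hds : 0 < ds)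
    (hγ : 0 < γ) (hTi : 0 < Ti) (hTinf : 0 < Tinf) (hh₀ : 0 < h₀)
    (ω : ℝ) (hω : ω = Real.sqrt (dl / ds))
    (ν : ℝ) (hνpos : 0 < ν)
    (s : ℝ → ℝ) (hs : ∀ t : ℝ, s t = 2 * ν * Real.sqrt (dl * t))
    (Fl El Fs Es : ℝ)
    (hFl : Fl = -(2 * h₀ * Tinf * Real.sqrt dl * kummerM (-α / 2) (1 / 2) (-ν ^ 2)) /
      (kl * kummerM (-α / 2) (1 / 2) (-ν ^ 2)
        + 2 * Real.sqrt dl * h₀ * ν * kummerM (-α / 2 + 1 / 2) (3 / 2) (-ν ^ 2)))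
    (hEl : El = -ν * kummerM (-α / 2 + 1 / 2) (3 / 2) (-ν ^ 2) * Fl /
      kummerM (-α / 2) (1 / 2) (-ν ^ 2))
    (hFs : Fs = -Ti * (2:ℝ) ^ (α + 1) * ds ^ (α / 2) *
      kummerM (α / 2 + 1 / 2) (1 / 2) (ν ^ 2 * ω ^ 2) /
        tricomiU (α / 2 + 1 / 2) (1 / 2) (ν ^ 2 * ω ^ 2))
    (hEs : Es = -ν * ω * kummerM (-α / 2 + 1 / 2) (3 / 2) (-(ν ^ 2 * ω ^ 2)) * Fs /
      kummerM (-α / 2) (1 / 2) (-(ν ^ 2 * ω ^ 2)))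
    (Ψl Ψs : ℝ → ℝ → ℝ)
    (hΨl : ∀ x t : ℝ, Ψl x t =
      t ^ (α / 2) *
        (El * kummerM (-α / 2) (1 / 2) (-(x / (2 * Real.sqrt (dl * t))) ^ 2)
          + Fl * (x / (2 * Real.sqrt (dl * t))) *
              kummerM (-α / 2 + 1 / 2) (3 / 2) (-(x / (2 * Real.sqrt (dl * t))) ^ 2)))
    (hΨs : ∀ x t : ℝ, Ψs x t =
      t ^ (α / 2) *
        (Es * kummerM (-α / 2) (1 / 2) (-(x / (2 * Real.sqrt (ds * t))) ^ 2)
          + Fs * (x / (2 * Real.sqrt (ds * t))) *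
              kummerM (-α / 2 + 1 / 2) (3 / 2) (-(x / (2 * Real.sqrt (ds * t))) ^ 2))) :
    (∀ t : ℝ, 0 < t →
        ks * deriv (fun y => Ψs y t) (s t) - kl * deriv (fun y => Ψl y t) (s t)
          = γ * (s t) ^ α * deriv s t) ↔
      -(ks * Ti * ds ^ ((α - 1) / 2) / (γ * dl ^ ((α + 1) / 2))) *
          (1 / tricomiU (α / 2 + 1 / 2) (1 / 2) (ν ^ 2 * ω ^ 2))
        + h₀ * Tinf / (γ * (2:ℝ) ^ α * dl ^ ((α + 1) / 2)) *
          (1 / (kummerM (α / 2 + 1 / 2) (1 / 2) (ν ^ 2)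
                + 2 * Real.sqrt dl * h₀ / kl * ν * kummerM (α / 2 + 1) (3 / 2) (ν ^ 2)))
        = ν ^ (α + 1) :=
  statement_19_general α kl ks dl ds γ Ti Tinf h₀ (by linarith) hkl hdl hds hγ.ne' ω hω ν hνpos
    s hs Fl El Fs Es hFl hEl hFs hEs Ψl Ψs hΨl hΨs
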